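/- arXiv:1205.3612 — 3 statements merged into one kernel-verified Lean document; each statement's English description precedes it below -/
import Mathlib

section
/- In typed semirings, if the untyped strict equality ⊢ a =⁺ b is derivable, then for all objects n,m, a : n→m is derivable if and only if b : n→m is derivable. -/
/-- Terms over the signature {·₂, +₂, 1₀, 0₀}. -/
inductive SRTerm (X : Type) : Type where
  | var : X → SRTerm X
  | one : SRTerm X
  | zero : SRTerm X
  | mul : SRTerm X → SRTerm X → SRTerm X
  | add : SRTerm X → SRTerm X → SRTerm X

/-- Typing judgement for typed semirings, in environment `Γ`. -/
inductive SRTyp {X T : Type} (Γ : X → T × T) : SRTerm X → T → T → Prop where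
  | var (x : X) (n m : T) : Γ x = (n, m) → SRTyp Γ (.var x) n m
  | one (n : T) : SRTyp Γ .one n n
  | zero (n m : T) : SRTyp Γ .zero n m
  | mul {a b : SRTerm X} {n m p : T} :
      SRTyp Γ a n m → SRTyp Γ b m p → SRTyp Γ (.mul a b) n p
  | add {a b : SRTerm X} {n m : T} :
      SRTyp Γ a n m → SRTyp Γ b n m → SRTyp Γ (.add a b) n m

/-- `⌊a⌋`: the normal form of `a` for the convergent rewriting system
`a+0 → a`, `0+a → a`, `0·a → 0`, `a·0 → 0`. -/
def SRTerm.norm {X : Type} : SRTerm X → SRTerm X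
  | .var x => .var x
  | .one => .one
  | .zero => .zero
  | .mul a b =>
    match a.norm, b.norm with
    | .zero, _ => .zero
    | _, .zero => .zero
    | a', b' => .mul a' b'
  | .add a b =>
    match a.norm, b.norm with
    | .zero, b' => b'
    | a', .zero => a'
    | a', b' => .add a' b'

/-- Strict typed equality judgement `a =⁺ b : n→m` for typed semirings: the semiring
equality judgement without the annihilation rules, and with the two distributivity
rules restricted to strict factors. -/
inductive SREqS {X T : Type} (Γ : X → T × T) : SRTerm X → SRTerm X → T → T → Prop where
  | var (x : X) (n m : T) : Γ x = (n, m) → SREqS Γ (.var x) (.var x) n m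
  | symm {a b : SRTerm X} {n m : T} : SREqS Γ a b n m → SREqS Γ b a n m
  | trans {a b c : SRTerm X} {n m : T} :
      SREqS Γ a b n m → SREqS Γ b c n m → SREqS Γ a c n m
  | one (n : T) : SREqS Γ .one .one n n
  | zero (n m : T) : SREqS Γ .zero .zero n m
  | mul {a a' b b' : SRTerm X} {n m p : T} :
      SREqS Γ a a' n m → SREqS Γ b b' m p → SREqS Γ (.mul a b) (.mul a' b') n p
  | add {a a' b b' : SRTerm X} {n m : T} :
      SREqS Γ a a' n m → SREqS Γ b b' n m → SREqS Γ (.add a b) (.add a' b') n m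
  | one_mul {a : SRTerm X} {n m : T} : SRTyp Γ a n m → SREqS Γ (.mul .one a) a n m
  | mul_one {a : SRTerm X} {n m : T} : SRTyp Γ a n m → SREqS Γ (.mul a .one) a n m
  | mul_assoc {a b c : SRTerm X} {n m p q : T} :
      SRTyp Γ a n m → SRTyp Γ b m p → SRTyp Γ c p q →
      SREqS Γ (.mul (.mul a b) c) (.mul a (.mul b c)) n q
  | add_zero {a : SRTerm X} {n m : T} : SRTyp Γ a n m → SREqS Γ (.add a .zero) a n m
  | add_comm {a b : SRTerm X} {n m : T} :
      SRTyp Γ a n m → SRTyp Γ b n m → SREqS Γ (.add a b) (.add b a) n m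
  | add_assoc {a b c : SRTerm X} {n m : T} :
      SRTyp Γ a n m → SRTyp Γ b n m → SRTyp Γ c n m →
      SREqS Γ (.add (.add a b) c) (.add a (.add b c)) n m
  | mul_add {a b c : SRTerm X} {n m p : T} :
      SRTyp Γ a n m → SRTyp Γ b m p → SRTyp Γ c m p → a.norm ≠ .zero →
      SREqS Γ (.mul a (.add b c)) (.add (.mul a b) (.mul a c)) n p
  | add_mul {a b c : SRTerm X} {n m p : T} :
      SRTyp Γ a n m → SRTyp Γ b p n → SRTyp Γ c p n → a.norm ≠ .zero →
      SREqS Γ (.mul (.add b c) a) (.add (.mul b a) (.mul c a)) p m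

/-!
Read a term `a` as the relation `n, m ↦ (a : n → m)` on objects: a product denotes the composition
of relations, a sum their intersection, `1` the equality and `0` the full relation.
Composition is associative with unit the equality, and intersection is associative and commutative
with unit the full relation, so every axiom of strict equality except distributivity holds for
arbitrary relations. Composition with `r` on the left (right) distributes over intersections when
`r` relates each object to (from) at most one object, and strict terms denote such relations, the
full relation `0` being the only obstruction.
-/

section Relations

open Relation Relator

variable {α β γ : Type*}

theorem comp_inf_of_rightUnique {r : α → β → Prop} (hr : RightUnique r) (s t : β → γ → Prop) :
    Comp r (s ⊓ t) = Comp r s ⊓ Comp r t := by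
  ext a c
  constructor
  · rintro ⟨b, hab, hs, ht⟩
    exact ⟨⟨b, hab, hs⟩, ⟨b, hab, ht⟩⟩
  · rintro ⟨⟨b, hab, hs⟩, ⟨b', hab', ht⟩⟩
    obtain rfl : b = b' := hr hab hab'
    exact ⟨b, hab, hs, ht⟩

theorem inf_comp_of_leftUnique {t : β → γ → Prop} (ht : LeftUnique t) (r s : α → β → Prop) :
    Comp (r ⊓ s) t = Comp r t ⊓ Comp s t := by
  ext a c
  constructor
  · rintro ⟨b, ⟨hr, hs⟩, hbc⟩
    exact ⟨⟨b, hr, hbc⟩, ⟨b, hs, hbc⟩⟩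
  · rintro ⟨⟨b, hr, hbc⟩, ⟨b', hs, hbc'⟩⟩
    obtain rfl : b = b' := ht hbc hbc'
    exact ⟨b, ⟨hr, hs⟩, hbc⟩

theorem biUnique_comp {r : α → β → Prop} {s : β → γ → Prop} (hr : BiUnique r) (hs : BiUnique s) :
    BiUnique (Comp r s) := by
  constructor
  · rintro a a' c ⟨b, hab, hbc⟩ ⟨b', hab', hbc'⟩
    obtain rfl : b = b' := hs.left hbc hbc'
    exact hr.left hab hab'
  · rintro a c c' ⟨b, hab, hbc⟩ ⟨b', hab', hbc'⟩
    obtain rfl : b = b' := hr.right hab hab'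
    exact hs.right hbc hbc'

theorem biUnique_of_le {r s : α → β → Prop} (hs : BiUnique s) (h : r ≤ s) : BiUnique r :=
  ⟨fun _ _ _ hac hbc => hs.left (h _ _ hac) (h _ _ hbc),
    fun _ _ _ hab hac => hs.right (h _ _ hab) (h _ _ hac)⟩

end Relations

namespace SRTerm

variable {X : Type} {a b : SRTerm X}

theorem norm_mul_eq_zero : (mul a b).norm = zero ↔ a.norm = zero ∨ b.norm = zero := by
  rw [norm]
  cases a.norm <;> cases b.norm <;> simp

theorem norm_add_eq_zero : (add a b).norm = zero ↔ a.norm = zero ∧ b.norm = zero := by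
  rw [norm]
  cases a.norm <;> cases b.norm <;> simp

end SRTerm

namespace SRTyp

variable {X T : Type} (Γ : X → T × T)

theorem one_eq : SRTyp Γ .one = (· = ·) := by
  ext n m
  constructor
  · rintro ⟨⟩
    rfl
  · rintro rfl
    exact .one n

theorem zero_eq_top : SRTyp Γ .zero = ⊤ := by
  ext n m
  exact iff_of_true (.zero n m) trivial

theorem mul_eq_comp (a b : SRTerm X) :
    SRTyp Γ (.mul a b) = Relation.Comp (SRTyp Γ a) (SRTyp Γ b) := by
  ext n p
  constructor
  · rintro (_ | _ | _ | ⟨ha, hb⟩)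
    exact ⟨_, ha, hb⟩
  · rintro ⟨m, ha, hb⟩
    exact .mul ha hb

theorem add_eq_inf (a b : SRTerm X) : SRTyp Γ (.add a b) = SRTyp Γ a ⊓ SRTyp Γ b := by
  ext n m
  constructor
  · rintro (_ | _ | _ | _ | ⟨ha, hb⟩)
    exact ⟨ha, hb⟩
  · rintro ⟨ha, hb⟩
    exact .add ha hb

theorem biUnique_var (x : X) : Relator.BiUnique (SRTyp Γ (.var x)) := by
  constructor
  · rintro n n' m ⟨_, _, _, h⟩ ⟨_, _, _, h'⟩
    exact congrArg Prod.fst (h.symm.trans h')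
  · rintro n m m' ⟨_, _, _, h⟩ ⟨_, _, _, h'⟩
    exact congrArg Prod.snd (h.symm.trans h')

theorem biUnique_of_norm_ne_zero {a : SRTerm X} (ha : a.norm ≠ .zero) :
    Relator.BiUnique (SRTyp Γ a) := by
  induction a with
  | var x => exact biUnique_var Γ x
  | one =>
    rw [one_eq]
    exact ⟨fun _ _ _ h h' => h.trans h'.symm, fun _ _ _ h h' => h.symm.trans h'⟩
  | zero => exact absurd rfl ha
  | mul a b iha ihb =>
    rw [Ne, SRTerm.norm_mul_eq_zero, not_or] at ha
    rw [mul_eq_comp]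
    exact biUnique_comp (iha ha.1) (ihb ha.2)
  | add a b iha ihb =>
    rw [Ne, SRTerm.norm_add_eq_zero, not_and_or] at ha
    rw [add_eq_inf]
    rcases ha with ha | hb
    · exact biUnique_of_le (iha ha) inf_le_left
    · exact biUnique_of_le (ihb hb) inf_le_right

end SRTyp

open SRTyp in
theorem semiring_strict_eq_preserves_types_general {X S T : Type} {Δ : X → S × S} (Γ : X → T × T)
    {a b : SRTerm X} {s t : S} (h : SREqS Δ a b s t) : SRTyp Γ a = SRTyp Γ b := by
  induction h with
  | var | one | zero => rfl
  | symm _ ih => exact ih.symm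
  | trans _ _ ihab ihbc => exact ihab.trans ihbc
  | mul _ _ iha ihb => rw [mul_eq_comp, mul_eq_comp, iha, ihb]
  | add _ _ iha ihb => rw [add_eq_inf, add_eq_inf, iha, ihb]
  | one_mul => rw [mul_eq_comp, one_eq, Relation.eq_comp]
  | mul_one => rw [mul_eq_comp, one_eq, Relation.comp_eq]
  | mul_assoc => simp only [mul_eq_comp, Relation.comp_assoc]
  | add_zero => rw [add_eq_inf, zero_eq_top, inf_top_eq]
  | add_comm => rw [add_eq_inf, add_eq_inf, inf_comm]
  | add_assoc => simp only [add_eq_inf, inf_assoc]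
  | mul_add _ _ _ ha =>
    simp only [mul_eq_comp, add_eq_inf]
    exact comp_inf_of_rightUnique (biUnique_of_norm_ne_zero Γ ha).right _ _
  | add_mul _ _ _ ha =>
    simp only [mul_eq_comp, add_eq_inf]
    exact inf_comp_of_leftUnique (biUnique_of_norm_ne_zero Γ ha).left _ _

/-- In typed semirings, if the untyped strict equality `⊢ a =⁺ b` is derivable
(i.e. the strict equality over the singleton set of objects), then for all objects
`n,m`, `a : n→m` is derivable iff `b : n→m` is derivable. -/
theorem semiring_strict_eq_preserves_types {X T : Type} (Γ : X → T × T)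
    (a b : SRTerm X) :
    SREqS (fun _ : X => ((), ())) a b () () →
    ∀ n m : T, SRTyp Γ a n m ↔ SRTyp Γ b n m := by
  intro h n m
  rw [semiring_strict_eq_preserves_types_general Γ h]
end

section
/- Factorisation for Kleene algebras: if the untyped Kleene algebra equality ⊢ a = b is derivable, then the untyped strict equality ⊢ ⌊a⌋ =⁺ ⌊b⌋ of the normal forms is derivable. -/
/-- Terms over the signature {·₂, +₂, *₁, 1₀, 0₀}. -/
inductive KTerm (X : Type) : Type where
  | var : X → KTerm X
  | one : KTerm X
  | zero : KTerm X
  | mul : KTerm X → KTerm X → KTerm X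
  | add : KTerm X → KTerm X → KTerm X
  | star : KTerm X → KTerm X

/-- Typing judgement for typed Kleene algebras, in environment `Γ`. -/
inductive KTyp {X T : Type} (Γ : X → T × T) : KTerm X → T → T → Prop where
  | var (x : X) (n m : T) : Γ x = (n, m) → KTyp Γ (.var x) n m
  | one (n : T) : KTyp Γ .one n n
  | zero (n m : T) : KTyp Γ .zero n m
  | mul {a b : KTerm X} {n m p : T} :
      KTyp Γ a n m → KTyp Γ b m p → KTyp Γ (.mul a b) n p
  | add {a b : KTerm X} {n m : T} :
      KTyp Γ a n m → KTyp Γ b n m → KTyp Γ (.add a b) n m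
  | star {a : KTerm X} {n : T} : KTyp Γ a n n → KTyp Γ (.star a) n n

/-- `⌊a⌋`: the normal form of `a` for the convergent rewriting system
`a+0 → a`, `0+a → a`, `0·a → 0`, `a·0 → 0`, `0* → 1`. -/
def KTerm.norm {X : Type} : KTerm X → KTerm X
  | .var x => .var x
  | .one => .one
  | .zero => .zero
  | .mul a b =>
    match a.norm, b.norm with
    | .zero, _ => .zero
    | _, .zero => .zero
    | a', b' => .mul a' b'
  | .add a b =>
    match a.norm, b.norm with
    | .zero, b' => b'
    | a', .zero => a'
    | a', b' => .add a' b'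
  | .star a =>
    match a.norm with
    | .zero => .one
    | a' => .star a'

/-- Typed equality judgement for typed Kleene algebras, in environment `Γ`.
`a ≤ b : n→m` abbreviates `a+b = b : n→m`. -/
inductive KEq {X T : Type} (Γ : X → T × T) : KTerm X → KTerm X → T → T → Prop where
  | var (x : X) (n m : T) : Γ x = (n, m) → KEq Γ (.var x) (.var x) n m
  | symm {a b : KTerm X} {n m : T} : KEq Γ a b n m → KEq Γ b a n m
  | trans {a b c : KTerm X} {n m : T} :
      KEq Γ a b n m → KEq Γ b c n m → KEq Γ a c n m
  | one (n : T) : KEq Γ .one .one n n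
  | zero (n m : T) : KEq Γ .zero .zero n m
  | mul {a a' b b' : KTerm X} {n m p : T} :
      KEq Γ a a' n m → KEq Γ b b' m p → KEq Γ (.mul a b) (.mul a' b') n p
  | add {a a' b b' : KTerm X} {n m : T} :
      KEq Γ a a' n m → KEq Γ b b' n m → KEq Γ (.add a b) (.add a' b') n m
  | star {a b : KTerm X} {n : T} : KEq Γ a b n n → KEq Γ (.star a) (.star b) n n
  | one_mul {a : KTerm X} {n m : T} : KTyp Γ a n m → KEq Γ (.mul .one a) a n m
  | mul_one {a : KTerm X} {n m : T} : KTyp Γ a n m → KEq Γ (.mul a .one) a n m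
  | mul_assoc {a b c : KTerm X} {n m p q : T} :
      KTyp Γ a n m → KTyp Γ b m p → KTyp Γ c p q →
      KEq Γ (.mul (.mul a b) c) (.mul a (.mul b c)) n q
  | add_zero {a : KTerm X} {n m : T} : KTyp Γ a n m → KEq Γ (.add a .zero) a n m
  | add_comm {a b : KTerm X} {n m : T} :
      KTyp Γ a n m → KTyp Γ b n m → KEq Γ (.add a b) (.add b a) n m
  | add_assoc {a b c : KTerm X} {n m : T} :
      KTyp Γ a n m → KTyp Γ b n m → KTyp Γ c n m →
      KEq Γ (.add (.add a b) c) (.add a (.add b c)) n m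
  | mul_add {a b c : KTerm X} {n m p : T} :
      KTyp Γ a n m → KTyp Γ b m p → KTyp Γ c m p →
      KEq Γ (.mul a (.add b c)) (.add (.mul a b) (.mul a c)) n p
  | add_mul {a b c : KTerm X} {n m p : T} :
      KTyp Γ a n m → KTyp Γ b p n → KTyp Γ c p n →
      KEq Γ (.mul (.add b c) a) (.add (.mul b a) (.mul c a)) p m
  | mul_zero {a : KTerm X} {n m p : T} : KTyp Γ a n m → KEq Γ (.mul a .zero) .zero n p
  | zero_mul {a : KTerm X} {n m p : T} : KTyp Γ a n m → KEq Γ (.mul .zero a) .zero p m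
  | add_idem {a : KTerm X} {n m : T} : KTyp Γ a n m → KEq Γ (.add a a) a n m
  | star_unfold {a : KTerm X} {n : T} :
      KTyp Γ a n n → KEq Γ (.add .one (.mul a (.star a))) (.star a) n n
  | star_ind_l {a b : KTerm X} {n m : T} :
      KEq Γ (.add (.mul a b) b) b n m →
      KEq Γ (.add (.mul (.star a) b) b) b n m
  | star_ind_r {a b : KTerm X} {n m : T} :
      KEq Γ (.add (.mul b a) b) b n m →
      KEq Γ (.add (.mul b (.star a)) b) b n m

/-- Strict typed equality judgement `a =⁺ b : n→m` for typed Kleene algebras: the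
Kleene algebra equality judgement without the annihilation rules, with the two
distributivity rules restricted to strict factors, and with the two star induction
rules restricted to strict `b`. `a ≤ b : n→m` abbreviates `a+b = b : n→m`. -/
inductive KEqS {X T : Type} (Γ : X → T × T) : KTerm X → KTerm X → T → T → Prop where
  | var (x : X) (n m : T) : Γ x = (n, m) → KEqS Γ (.var x) (.var x) n m
  | symm {a b : KTerm X} {n m : T} : KEqS Γ a b n m → KEqS Γ b a n m
  | trans {a b c : KTerm X} {n m : T} :
      KEqS Γ a b n m → KEqS Γ b c n m → KEqS Γ a c n m
  | one (n : T) : KEqS Γ .one .one n n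
  | zero (n m : T) : KEqS Γ .zero .zero n m
  | mul {a a' b b' : KTerm X} {n m p : T} :
      KEqS Γ a a' n m → KEqS Γ b b' m p → KEqS Γ (.mul a b) (.mul a' b') n p
  | add {a a' b b' : KTerm X} {n m : T} :
      KEqS Γ a a' n m → KEqS Γ b b' n m → KEqS Γ (.add a b) (.add a' b') n m
  | star {a b : KTerm X} {n : T} : KEqS Γ a b n n → KEqS Γ (.star a) (.star b) n n
  | one_mul {a : KTerm X} {n m : T} : KTyp Γ a n m → KEqS Γ (.mul .one a) a n m
  | mul_one {a : KTerm X} {n m : T} : KTyp Γ a n m → KEqS Γ (.mul a .one) a n m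
  | mul_assoc {a b c : KTerm X} {n m p q : T} :
      KTyp Γ a n m → KTyp Γ b m p → KTyp Γ c p q →
      KEqS Γ (.mul (.mul a b) c) (.mul a (.mul b c)) n q
  | add_zero {a : KTerm X} {n m : T} : KTyp Γ a n m → KEqS Γ (.add a .zero) a n m
  | add_comm {a b : KTerm X} {n m : T} :
      KTyp Γ a n m → KTyp Γ b n m → KEqS Γ (.add a b) (.add b a) n m
  | add_assoc {a b c : KTerm X} {n m : T} :
      KTyp Γ a n m → KTyp Γ b n m → KTyp Γ c n m →
      KEqS Γ (.add (.add a b) c) (.add a (.add b c)) n m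
  | mul_add {a b c : KTerm X} {n m p : T} :
      KTyp Γ a n m → KTyp Γ b m p → KTyp Γ c m p → a.norm ≠ .zero →
      KEqS Γ (.mul a (.add b c)) (.add (.mul a b) (.mul a c)) n p
  | add_mul {a b c : KTerm X} {n m p : T} :
      KTyp Γ a n m → KTyp Γ b p n → KTyp Γ c p n → a.norm ≠ .zero →
      KEqS Γ (.mul (.add b c) a) (.add (.mul b a) (.mul c a)) p m
  | add_idem {a : KTerm X} {n m : T} : KTyp Γ a n m → KEqS Γ (.add a a) a n m
  | star_unfold {a : KTerm X} {n : T} :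
      KTyp Γ a n n → KEqS Γ (.add .one (.mul a (.star a))) (.star a) n n
  | star_ind_l {a b : KTerm X} {n m : T} :
      KEqS Γ (.add (.mul a b) b) b n m → b.norm ≠ .zero →
      KEqS Γ (.add (.mul (.star a) b) b) b n m
  | star_ind_r {a b : KTerm X} {n m : T} :
      KEqS Γ (.add (.mul b a) b) b n m → b.norm ≠ .zero →
      KEqS Γ (.add (.mul b (.star a)) b) b n m

/-!
Non-strictness `⌊a⌋ = 0` is evaluation to `0` in the two-element Kleene algebra, so it is invariant
under `=⁺`. Hence, at each rule of a derivation of `a = b`, either a non-strict subterm makes the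
normalised instance of the rule degenerate (to a reflexivity, or to `1·b ≤ b` in a star induction
with `⌊a⌋ = 0`), or every subterm is strict, normalisation commutes with all operations, and the
normalised instance is an instance of the corresponding strict rule.
-/

namespace KTerm

variable {X : Type} {a b : KTerm X}

instance decidableEqZero : (a : KTerm X) → Decidable (a = .zero)
  | .zero => isTrue rfl
  | .var _ | .one | .mul _ _ | .add _ _ | .star _ => isFalse nofun

@[simp]
theorem norm_mul (a b : KTerm X) :
    (a.mul b).norm = if a.norm = .zero ∨ b.norm = .zero then .zero else .mul a.norm b.norm := by
  rw [norm]
  split <;> simp_all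

@[simp]
theorem norm_add (a b : KTerm X) :
    (a.add b).norm =
      if a.norm = .zero then b.norm else if b.norm = .zero then a.norm
      else .add a.norm b.norm := by
  rw [norm]
  split <;> simp_all

@[simp]
theorem norm_star (a : KTerm X) :
    a.star.norm = if a.norm = .zero then .one else .star a.norm := by
  rw [norm]
  split <;> simp_all

@[simp]
theorem norm_one : (one : KTerm X).norm = .one := rfl

@[simp]
theorem norm_zero : (zero : KTerm X).norm = .zero := rfl

theorem norm_mul_eq_zero : (a.mul b).norm = .zero ↔ a.norm = .zero ∨ b.norm = .zero := by
  rw [norm_mul]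
  split_ifs with h <;> simp [h]

theorem norm_add_eq_zero : (a.add b).norm = .zero ↔ a.norm = .zero ∧ b.norm = .zero := by
  rw [norm_add]
  split_ifs with ha hb <;> simp [*]

theorem norm_star_ne_zero : a.star.norm ≠ .zero := by
  rw [norm_star]
  split_ifs <;> simp

@[simp]
theorem norm_norm (a : KTerm X) : a.norm.norm = a.norm := by
  induction a with
  | var | one | zero => rfl
  | mul a b iha ihb =>
    rw [norm_mul]
    split_ifs with h
    · rfl
    · rw [norm_mul, iha, ihb, if_neg h]
  | add a b iha ihb =>
    rw [norm_add]
    split_ifs with ha hb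
    · exact ihb
    · exact iha
    · rw [norm_add, iha, ihb, if_neg ha, if_neg hb]
  | star a ih =>
    rw [norm_star]
    split_ifs with h
    · rfl
    · rw [norm_star, ih, if_neg h]

end KTerm

section

variable {X T : Type} {Γ : X → T × T} {a a' b b' c : KTerm X} {n n' m m' p q : T}

namespace KTyp

theorem norm (h : KTyp Γ a n m) : KTyp Γ a.norm n m := by
  induction h with
  | var x n m h => exact .var x n m h
  | one n => exact .one n
  | zero n m => exact .zero n m
  | mul _ _ iha ihb =>
    rw [KTerm.norm_mul]
    split_ifs
    · exact .zero _ _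
    · exact .mul iha ihb
  | add _ _ iha ihb =>
    rw [KTerm.norm_add]
    split_ifs
    · exact ihb
    · exact iha
    · exact .add iha ihb
  | star _ ih =>
    rw [KTerm.norm_star]
    split_ifs
    · exact .one _
    · exact .star ih

-- Even a strict term may have several types: `1` has type `n → n` for every `n`.
theorem source_eq_iff_target_eq (h : KTyp Γ a n m) (h' : KTyp Γ a n' m') (ha : a.norm ≠ .zero) :
    n = n' ↔ m = m' := by
  induction h generalizing n' m' with
  | var x n m hx =>
    cases h' with
    | var _ _ _ hx' =>
      obtain ⟨rfl, rfl⟩ := Prod.mk.inj (hx.symm.trans hx')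
      simp
  | one => cases h'; rfl
  | zero => exact absurd KTerm.norm_zero ha
  | mul _ _ iha ihb =>
    obtain ⟨ha₁, hb₁⟩ := not_or.mp (mt KTerm.norm_mul_eq_zero.mpr ha)
    cases h' with
    | mul h₁ h₂ => exact (iha h₁ ha₁).trans (ihb h₂ hb₁)
  | add _ _ iha ihb =>
    cases h' with
    | add h₁ h₂ =>
      rcases not_and_or.mp (mt KTerm.norm_add_eq_zero.mpr ha) with ha₁ | hb₁
      · exact iha h₁ ha₁
      · exact ihb h₂ hb₁
  | star => cases h'; rfl

end KTyp

namespace KEqS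

theorem refl (h : KTyp Γ a n m) : KEqS Γ a a n m :=
  .trans (.symm (.add_idem h)) (.add_idem h)

theorem typ (h : KEqS Γ a b n m) : KTyp Γ a n m ∧ KTyp Γ b n m := by
  induction h with
  | var x n m h => exact ⟨.var x n m h, .var x n m h⟩
  | symm _ ih => exact ih.symm
  | trans _ _ ih ih' => exact ⟨ih.1, ih'.2⟩
  | one n => exact ⟨.one n, .one n⟩
  | zero n m => exact ⟨.zero n m, .zero n m⟩
  | mul _ _ ih ih' => exact ⟨.mul ih.1 ih'.1, .mul ih.2 ih'.2⟩
  | add _ _ ih ih' => exact ⟨.add ih.1 ih'.1, .add ih.2 ih'.2⟩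
  | star _ ih => exact ⟨.star ih.1, .star ih.2⟩
  | one_mul ha => exact ⟨.mul (.one _) ha, ha⟩
  | mul_one ha => exact ⟨.mul ha (.one _), ha⟩
  | mul_assoc ha hb hc => exact ⟨.mul (.mul ha hb) hc, .mul ha (.mul hb hc)⟩
  | add_zero ha => exact ⟨.add ha (.zero _ _), ha⟩
  | add_comm ha hb => exact ⟨.add ha hb, .add hb ha⟩
  | add_assoc ha hb hc => exact ⟨.add (.add ha hb) hc, .add ha (.add hb hc)⟩
  | mul_add ha hb hc => exact ⟨.mul ha (.add hb hc), .add (.mul ha hb) (.mul ha hc)⟩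
  | add_mul ha hb hc => exact ⟨.mul (.add hb hc) ha, .add (.mul hb ha) (.mul hc ha)⟩
  | add_idem ha => exact ⟨.add ha ha, ha⟩
  | star_unfold ha => exact ⟨.add (.one _) (.mul ha (.star ha)), .star ha⟩
  | star_ind_l _ hb ih =>
    -- The premise types `b` twice, as a factor of `a·b` and as a summand, which makes `a` square.
    have ⟨.add (.mul ha hb₁) _, hb₂⟩ := ih
    obtain rfl := (hb₁.source_eq_iff_target_eq hb₂ hb).mpr rfl
    exact ⟨.add (.mul (.star ha) hb₂) hb₂, hb₂⟩
  | star_ind_r _ hb ih =>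
    have ⟨.add (.mul hb₁ ha) _, hb₂⟩ := ih
    obtain rfl := (hb₁.source_eq_iff_target_eq hb₂ hb).mp rfl
    exact ⟨.add (.mul hb₂ (.star ha)) hb₂, hb₂⟩

theorem norm_eq_zero_iff (h : KEqS Γ a b n m) : a.norm = .zero ↔ b.norm = .zero := by
  induction h with
  | symm _ ih => exact ih.symm
  | trans _ _ ih ih' => exact ih.trans ih'
  | _ =>
    simp_all only [KTerm.norm_mul_eq_zero, KTerm.norm_add_eq_zero, KTerm.norm_star_ne_zero,
      KTerm.norm_one, KTerm.norm_zero, reduceCtorEq] <;> tauto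

theorem norm_eq_zero_iff_of_norm (h : KEqS Γ a.norm b.norm n m) :
    a.norm = .zero ↔ b.norm = .zero := by
  simpa only [KTerm.norm_norm] using h.norm_eq_zero_iff

theorem norm_mul_congr (ha : KEqS Γ a.norm a'.norm n m) (hb : KEqS Γ b.norm b'.norm m p) :
    KEqS Γ (a.mul b).norm (a'.mul b').norm n p := by
  simp only [KTerm.norm_mul, ha.norm_eq_zero_iff_of_norm, hb.norm_eq_zero_iff_of_norm]
  split_ifs
  · exact .zero n p
  · exact .mul ha hb

theorem norm_add_congr (ha : KEqS Γ a.norm a'.norm n m) (hb : KEqS Γ b.norm b'.norm n m) :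
    KEqS Γ (a.add b).norm (a'.add b').norm n m := by
  simp only [KTerm.norm_add, ha.norm_eq_zero_iff_of_norm, hb.norm_eq_zero_iff_of_norm]
  split_ifs
  · exact hb
  · exact ha
  · exact .add ha hb

theorem norm_star_congr (h : KEqS Γ a.norm b.norm n n) : KEqS Γ a.star.norm b.star.norm n n := by
  simp only [KTerm.norm_star, h.norm_eq_zero_iff_of_norm]
  split_ifs
  · exact .one n
  · exact .star h

theorem norm_one_mul (h : KTyp Γ a n m) : KEqS Γ (KTerm.mul .one a).norm a.norm n m := by
  by_cases ha : a.norm = .zero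
  · simpa [ha] using KEqS.zero n m
  · simpa [ha] using KEqS.one_mul h.norm

theorem norm_mul_one (h : KTyp Γ a n m) : KEqS Γ (a.mul .one).norm a.norm n m := by
  by_cases ha : a.norm = .zero
  · simpa [ha] using KEqS.zero n m
  · simpa [ha] using KEqS.mul_one h.norm

theorem norm_mul_assoc (ha : KTyp Γ a n m) (hb : KTyp Γ b m p) (hc : KTyp Γ c p q) :
    KEqS Γ ((a.mul b).mul c).norm (a.mul (b.mul c)).norm n q := by
  by_cases ha₀ : a.norm = .zero
  · simpa [ha₀] using KEqS.zero n q
  by_cases hb₀ : b.norm = .zero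
  · simpa [hb₀] using KEqS.zero n q
  by_cases hc₀ : c.norm = .zero
  · simpa [hc₀] using KEqS.zero n q
  simpa [ha₀, hb₀, hc₀] using KEqS.mul_assoc ha.norm hb.norm hc.norm

theorem norm_add_zero (h : KTyp Γ a n m) : KEqS Γ (a.add .zero).norm a.norm n m := by
  by_cases ha : a.norm = .zero
  · simpa [ha] using KEqS.zero n m
  · simpa [ha] using refl h.norm

theorem norm_add_comm (ha : KTyp Γ a n m) (hb : KTyp Γ b n m) :
    KEqS Γ (a.add b).norm (b.add a).norm n m := by
  by_cases ha₀ : a.norm = .zero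
  · by_cases hb₀ : b.norm = .zero
    · simpa [ha₀, hb₀] using KEqS.zero n m
    · simpa [ha₀, hb₀] using refl hb.norm
  · by_cases hb₀ : b.norm = .zero
    · simpa [ha₀, hb₀] using refl ha.norm
    · simpa [ha₀, hb₀] using KEqS.add_comm ha.norm hb.norm

theorem norm_add_assoc (ha : KTyp Γ a n m) (hb : KTyp Γ b n m) (hc : KTyp Γ c n m) :
    KEqS Γ ((a.add b).add c).norm (a.add (b.add c)).norm n m := by
  by_cases ha₀ : a.norm = .zero
  · simpa [ha₀] using refl (KTyp.add hb hc).norm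
  by_cases hb₀ : b.norm = .zero
  · simpa [ha₀, hb₀] using refl (KTyp.add ha hc).norm
  by_cases hc₀ : c.norm = .zero
  · simpa [ha₀, hb₀, hc₀] using refl (KTyp.add ha hb).norm
  simpa [ha₀, hb₀, hc₀] using KEqS.add_assoc ha.norm hb.norm hc.norm

theorem norm_mul_add (ha : KTyp Γ a n m) (hb : KTyp Γ b m p) (hc : KTyp Γ c m p) :
    KEqS Γ (a.mul (b.add c)).norm ((a.mul b).add (a.mul c)).norm n p := by
  by_cases ha₀ : a.norm = .zero
  · simpa [ha₀] using KEqS.zero n p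
  by_cases hb₀ : b.norm = .zero
  · simpa [hb₀] using refl (KTyp.mul ha hc).norm
  by_cases hc₀ : c.norm = .zero
  · simpa [ha₀, hb₀, hc₀] using refl (KTyp.mul ha hb).norm
  simpa [ha₀, hb₀, hc₀] using KEqS.mul_add ha.norm hb.norm hc.norm (by simpa)

theorem norm_add_mul (ha : KTyp Γ a n m) (hb : KTyp Γ b p n) (hc : KTyp Γ c p n) :
    KEqS Γ ((b.add c).mul a).norm ((b.mul a).add (c.mul a)).norm p m := by
  by_cases ha₀ : a.norm = .zero
  · simpa [ha₀] using KEqS.zero p m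
  by_cases hb₀ : b.norm = .zero
  · simpa [hb₀] using refl (KTyp.mul hc ha).norm
  by_cases hc₀ : c.norm = .zero
  · simpa [ha₀, hb₀, hc₀] using refl (KTyp.mul hb ha).norm
  simpa [ha₀, hb₀, hc₀] using KEqS.add_mul ha.norm hb.norm hc.norm (by simpa)

theorem norm_mul_zero : KEqS Γ (a.mul .zero).norm KTerm.zero.norm n p := by
  simpa using KEqS.zero n p

theorem norm_zero_mul : KEqS Γ (KTerm.mul .zero a).norm KTerm.zero.norm n p := by
  simpa using KEqS.zero n p

theorem norm_add_idem (h : KTyp Γ a n m) : KEqS Γ (a.add a).norm a.norm n m := by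
  by_cases ha : a.norm = .zero
  · simpa [ha] using KEqS.zero n m
  · simpa [ha] using KEqS.add_idem h.norm

theorem norm_star_unfold (h : KTyp Γ a n n) :
    KEqS Γ (KTerm.add .one (a.mul a.star)).norm a.star.norm n n := by
  by_cases ha : a.norm = .zero
  · simpa [ha] using KEqS.one n
  · simpa [ha] using KEqS.star_unfold h.norm

theorem norm_star_ind_l (h : KEqS Γ ((a.mul b).add b).norm b.norm n m) :
    KEqS Γ ((a.star.mul b).add b).norm b.norm n m := by
  have hb : KTyp Γ b.norm n m := h.typ.2
  by_cases hb₀ : b.norm = .zero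
  · simpa [hb₀] using KEqS.zero n m
  by_cases ha₀ : a.norm = .zero
  · have one_mul_le : KEqS Γ ((KTerm.mul .one b.norm).add b.norm) b.norm n m :=
      .trans (.add (.one_mul hb) (refl hb)) (.add_idem hb)
    simpa [ha₀, hb₀] using one_mul_le
  have mul_le : KEqS Γ ((a.norm.mul b.norm).add b.norm) b.norm n m := by
    simpa [ha₀, hb₀] using h
  simpa [ha₀, hb₀] using mul_le.star_ind_l (by simpa)

theorem norm_star_ind_r (h : KEqS Γ ((b.mul a).add b).norm b.norm n m) :
    KEqS Γ ((b.mul a.star).add b).norm b.norm n m := by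
  have hb : KTyp Γ b.norm n m := h.typ.2
  by_cases hb₀ : b.norm = .zero
  · simpa [hb₀] using KEqS.zero n m
  by_cases ha₀ : a.norm = .zero
  · have mul_one_le : KEqS Γ ((b.norm.mul .one).add b.norm) b.norm n m :=
      .trans (.add (.mul_one hb) (refl hb)) (.add_idem hb)
    simpa [ha₀, hb₀] using mul_one_le
  have mul_le : KEqS Γ ((b.norm.mul a.norm).add b.norm) b.norm n m := by
    simpa [ha₀, hb₀] using h
  simpa [ha₀, hb₀] using mul_le.star_ind_r (by simpa)

end KEqS

theorem kleene_factorisation_general (h : KEq Γ a b n m) : KEqS Γ a.norm b.norm n m := by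
  induction h with
  | var x n m h => exact .var x n m h
  | symm _ ih => exact ih.symm
  | trans _ _ ih ih' => exact ih.trans ih'
  | one n => exact .one n
  | zero n m => exact .zero n m
  | mul _ _ ih ih' => exact ih.norm_mul_congr ih'
  | add _ _ ih ih' => exact ih.norm_add_congr ih'
  | star _ ih => exact ih.norm_star_congr
  | one_mul ha => exact .norm_one_mul ha
  | mul_one ha => exact .norm_mul_one ha
  | mul_assoc ha hb hc => exact .norm_mul_assoc ha hb hc
  | add_zero ha => exact .norm_add_zero ha
  | add_comm ha hb => exact .norm_add_comm ha hb
  | add_assoc ha hb hc => exact .norm_add_assoc ha hb hc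
  | mul_add ha hb hc => exact .norm_mul_add ha hb hc
  | add_mul ha hb hc => exact .norm_add_mul ha hb hc
  | mul_zero => exact .norm_mul_zero
  | zero_mul => exact .norm_zero_mul
  | add_idem ha => exact .norm_add_idem ha
  | star_unfold ha => exact .norm_star_unfold ha
  | star_ind_l _ ih => exact ih.norm_star_ind_l
  | star_ind_r _ ih => exact ih.norm_star_ind_r

end

/-- Factorisation for Kleene algebras: if the untyped Kleene algebra equality
`⊢ a = b` is derivable (i.e. the equality over the singleton set of objects), then
the untyped strict equality `⊢ ⌊a⌋ =⁺ ⌊b⌋` of the normal forms is derivable. -/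
theorem kleene_factorisation {X : Type} (a b : KTerm X) :
    KEq (fun _ : X => ((), ())) a b () () →
    KEqS (fun _ : X => ((), ())) a.norm b.norm () () :=
  kleene_factorisation_general
end

section
/- Untyping theorem for cyclic MLL: if the list l has type n→n in environment Γ, then the untyped sequent ⊢ l is derivable if and only if the typed sequent ⊢ₙ l is derivable in Γ. -/
/-- MLL terms (formulae): variables, dual variables, multiplicative constants,
tensor and par. -/
inductive MLLTerm (X : Type) : Type where
  | var : X → MLLTerm X
  | covar : X → MLLTerm X
  | one : MLLTerm X
  | bot : MLLTerm X
  | tens : MLLTerm X → MLLTerm X → MLLTerm X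
  | parr : MLLTerm X → MLLTerm X → MLLTerm X

/-- Typing judgement for MLL terms, in environment `Γ`. -/
inductive MLLTyp {X T : Type} (Γ : X → T × T) : MLLTerm X → T → T → Prop where
  | var (x : X) (n m : T) : Γ x = (n, m) → MLLTyp Γ (.var x) n m
  | covar (x : X) (n m : T) : Γ x = (n, m) → MLLTyp Γ (.covar x) m n
  | one (n : T) : MLLTyp Γ .one n n
  | bot (n : T) : MLLTyp Γ .bot n n
  | tens {a b : MLLTerm X} {n m p : T} :
      MLLTyp Γ a n m → MLLTyp Γ b m p → MLLTyp Γ (.tens a b) n p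
  | parr {a b : MLLTerm X} {n m p : T} :
      MLLTyp Γ a n m → MLLTyp Γ b m p → MLLTyp Γ (.parr a b) n p

/-- Typing judgement for lists of MLL terms (composition of the types). -/
inductive MLLTypList {X T : Type} (Γ : X → T × T) : List (MLLTerm X) → T → T → Prop where
  | nil (n : T) : MLLTypList Γ [] n n
  | cons {a : MLLTerm X} {l : List (MLLTerm X)} {n m p : T} :
      MLLTyp Γ a n m → MLLTypList Γ l m p → MLLTypList Γ (a :: l) n p

/-- The typed one-sided sequent calculus for cyclic MLL: `MLLTSeq Γ n l` means
`⊢ₙ l` (the sequent `l` is derivable at type `n→n`). -/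
inductive MLLTSeq {X T : Type} (Γ : X → T × T) : T → List (MLLTerm X) → Prop where
  | one (n : T) : MLLTSeq Γ n [.one]
  | bot {n : T} {l : List (MLLTerm X)} : MLLTSeq Γ n l → MLLTSeq Γ n (.bot :: l)
  | tens {n : T} {l k : List (MLLTerm X)} {a b : MLLTerm X} :
      MLLTSeq Γ n (l ++ [a]) → MLLTSeq Γ n (b :: k) →
      MLLTSeq Γ n (l ++ .tens a b :: k)
  | parr {n : T} {a b : MLLTerm X} {l : List (MLLTerm X)} :
      MLLTSeq Γ n (a :: b :: l) → MLLTSeq Γ n (.parr a b :: l)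
  | ax (x : X) (n m : T) : Γ x = (n, m) → MLLTSeq Γ m [.covar x, .var x]
  | ex {a : MLLTerm X} {l : List (MLLTerm X)} {n m : T} :
      MLLTyp Γ a n m → MLLTSeq Γ m (l ++ [a]) → MLLTSeq Γ n (a :: l)

/-!
A path `n → p` in the graph with vertices `T` and edges `X` has boundary `p - n` in the free abelian
group on `T`, while a derivable sequent has boundary `0`, whatever types its derivation used: axioms
are cancelling pairs, and the other rules add boundaries up, exchange being harmless because the
group is commutative. So every typing of a derivable sequent is of the form `n → n`. This is what
makes a derivation retypable: a tensor rule splits its conclusion at an intermediate object, which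
is thereby forced to be the object of the conclusion.
-/

section Typing

variable {X T : Type} {Γ : X → T × T}

theorem mllTypList_append {l k : List (MLLTerm X)} {n p : T} :
    MLLTypList Γ (l ++ k) n p ↔ ∃ m, MLLTypList Γ l n m ∧ MLLTypList Γ k m p := by
  constructor
  · intro h
    induction l generalizing n with
    | nil => exact ⟨n, .nil n, h⟩
    | cons a l ih =>
      obtain _ | ⟨ha, hlk⟩ := h
      obtain ⟨m, hl, hk⟩ := ih hlk
      exact ⟨m, .cons ha hl, hk⟩
  · rintro ⟨m, hl, hk⟩
    induction hl with
    | nil => exact hk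
    | cons ha _ ih => exact .cons ha (ih hk)

theorem MLLTypList.append_singleton {l : List (MLLTerm X)} {a : MLLTerm X} {n m p : T}
    (hl : MLLTypList Γ l n m) (ha : MLLTyp Γ a m p) : MLLTypList Γ (l ++ [a]) n p :=
  mllTypList_append.2 ⟨m, hl, .cons ha (.nil p)⟩

theorem mllTyp_of_subsingleton [Subsingleton T] (a : MLLTerm X) (n m : T) : MLLTyp Γ a n m := by
  induction a generalizing n m with
  | var x => exact .var x n m (Subsingleton.elim _ _)
  | covar x => exact .covar x m n (Subsingleton.elim _ _)
  | one => exact Subsingleton.elim n m ▸ .one n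
  | bot => exact Subsingleton.elim n m ▸ .bot n
  | tens _ _ iha ihb => exact .tens (iha n n) (ihb n m)
  | parr _ _ iha ihb => exact .parr (iha n n) (ihb n m)

theorem mllTypList_of_subsingleton [Subsingleton T] (l : List (MLLTerm X)) (n m : T) :
    MLLTypList Γ l n m := by
  induction l with
  | nil => exact Subsingleton.elim n m ▸ .nil n
  | cons a l ih => exact .cons (mllTyp_of_subsingleton a n n) ih

end Typing

section Boundary

open FreeAbelianGroup (of)

variable {X S T : Type} {Γ : X → T × T} {Δ : X → S × S}

/-- The boundary of a term in the free abelian group on objects, for the environment `Γ`: target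
minus source for a variable, extended additively. It is defined for untypable terms too, so that it
can be computed along a derivation carried out in another environment. -/
def MLLTerm.boundary (Γ : X → T × T) : MLLTerm X → FreeAbelianGroup T
  | .var x => of (Γ x).2 - of (Γ x).1
  | .covar x => of (Γ x).1 - of (Γ x).2
  | .one => 0
  | .bot => 0
  | .tens a b => a.boundary Γ + b.boundary Γ
  | .parr a b => a.boundary Γ + b.boundary Γ

theorem MLLTyp.boundary_eq {a : MLLTerm X} {n m : T} (h : MLLTyp Γ a n m) :
    a.boundary Γ = of m - of n := by
  induction h with
  | var x n m hx => simp only [MLLTerm.boundary, hx]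
  | covar x n m hx => simp only [MLLTerm.boundary, hx]
  | one n => exact (sub_self _).symm
  | bot n => exact (sub_self _).symm
  | tens _ _ iha ihb => rw [MLLTerm.boundary, iha, ihb, sub_add_sub_cancel']
  | parr _ _ iha ihb => rw [MLLTerm.boundary, iha, ihb, sub_add_sub_cancel']

theorem MLLTypList.sum_boundary_eq {l : List (MLLTerm X)} {n m : T} (h : MLLTypList Γ l n m) :
    (l.map (MLLTerm.boundary Γ)).sum = of m - of n := by
  induction h with
  | nil n => exact (sub_self _).symm
  | cons ha _ ih =>
    rw [List.map_cons, List.sum_cons, ha.boundary_eq, ih, sub_add_sub_cancel']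

theorem MLLTSeq.sum_boundary_eq_zero (Γ : X → T × T) {l : List (MLLTerm X)} {s : S}
    (h : MLLTSeq Δ s l) : (l.map (MLLTerm.boundary Γ)).sum = 0 := by
  induction h with
  | one => simp [MLLTerm.boundary]
  | bot _ ih => simpa [MLLTerm.boundary] using ih
  | @tens _ l k a b _ _ ihl ihk =>
    simp only [List.map_append, List.map_cons, List.map_nil, List.sum_append, List.sum_cons,
      List.sum_nil, add_zero, MLLTerm.boundary] at ihl ihk ⊢
    calc (l.map _).sum + (a.boundary Γ + b.boundary Γ + (k.map _).sum)
        = ((l.map _).sum + a.boundary Γ) + (b.boundary Γ + (k.map _).sum) := by abel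
      _ = 0 := by rw [ihl, ihk, add_zero]
  | parr _ ih => simpa [MLLTerm.boundary, add_assoc] using ih
  | ax => simp [MLLTerm.boundary]
  | ex _ _ ih => simpa [add_comm] using ih

theorem MLLTSeq.eq_of_mllTypList {l : List (MLLTerm X)} {s : S} {n p : T} (h : MLLTSeq Δ s l)
    (hl : MLLTypList Γ l n p) : n = p := by
  have hboundary : of p - of n = 0 := hl.sum_boundary_eq.symm.trans (h.sum_boundary_eq_zero Γ)
  exact (FreeAbelianGroup.of_injective (sub_eq_zero.1 hboundary)).symm

theorem MLLTSeq.retype {l : List (MLLTerm X)} {s : S} {n : T} (h : MLLTSeq Δ s l)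
    (hl : MLLTypList Γ l n n) : MLLTSeq Γ n l := by
  induction h generalizing n with
  | one => exact .one n
  | bot _ ih =>
    obtain _ | ⟨⟨⟩, hl⟩ := hl
    exact .bot (ih hl)
  | tens hla _ ihla ihbk =>
    obtain ⟨_, hl, _ | ⟨_ | _ | _ | _ | ⟨ha, hb⟩, hk⟩⟩ := mllTypList_append.1 hl
    have hla_typ := hl.append_singleton ha
    obtain rfl := hla.eq_of_mllTypList hla_typ
    exact .tens (ihla hla_typ) (ihbk (.cons hb hk))
  | parr _ ih =>
    obtain _ | ⟨_ | _ | _ | _ | _ | ⟨ha, hb⟩, hl⟩ := hl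
    exact .parr (ih (.cons ha (.cons hb hl)))
  | ax x =>
    obtain _ | ⟨_ | ⟨_, _, _, hx⟩, _⟩ := hl
    exact .ax x _ _ hx
  | ex _ _ ih =>
    obtain _ | ⟨ha, hl⟩ := hl
    exact .ex ha (ih (hl.append_singleton ha))

end Boundary

/-- Untyping theorem for cyclic MLL: if the list `l` has type `n→n` in environment
`Γ`, then the untyped sequent `⊢ l` (i.e. the typed sequent over the singleton set
of objects) is derivable iff the typed sequent `⊢ₙ l` is derivable in `Γ`. -/
theorem mll_untyping {X T : Type} (Γ : X → T × T)
    (l : List (MLLTerm X)) (n : T) :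
    MLLTypList Γ l n n →
    (MLLTSeq (fun _ : X => ((), ())) () l ↔ MLLTSeq Γ n l) :=
  fun hl => ⟨fun h => h.retype hl, fun h => h.retype (mllTypList_of_subsingleton l () ())⟩
end
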